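/- arXiv:math/0111196 — 2 statements merged into one kernel-verified Lean document; each statement's English description precedes it below -/
import Mathlib

section
/- Let λ = (λ_1 ≤ … ≤ λ_n) be a sequential nondecreasing sequence of positive integers for which I(λ) exists, and set μ = mm(λ) = |{i : λ_i = λ_n}| (note that I(λ) ⊆ {1,…,n−μ}). Let S = S_λ = {x ∈ {-1,0,1}^n : Σ_{i=1}^n λ_i x_i = 0}, let T = {z ∈ {-1,0,1}^{n−μ} : Σ_{i=1}^{n−μ} λ_i z_i = 0}, and let π ∈ P(n) and ν ∈ P(n−μ) be the partitions whose only non-singleton block is I(λ). Then: (i) π↓S = {ρ ∈ P(n) : ρ|_{{1,…,n−μ}} ∈ ν↓T}; and (ii) S ∖ (π↓S) = {x ∈ {-1,0,1}^n : (x_1,…,x_{n−μ}) ∈ T∖(ν↓T) and Σ_{i=n−μ+1}^{n} x_i = 0}. -/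
/-- A vector in ℝ^n with all coordinates in {-1,0,1}. -/
def IsCube {n : ℕ} (x : Fin n → ℝ) : Prop := ∀ i, x i = -1 ∨ x i = 0 ∨ x i = 1

def PlusSet {n : ℕ} (x : Fin n → ℝ) : Set (Fin n) := {i | x i = 1}

def MinusSet {n : ℕ} (x : Fin n → ℝ) : Set (Fin n) := {i | x i = -1}

/-- An `n`-cut: a span-closed subset of {-1,0,1}^n all of whose nonzero elements
have nonempty Plus and Minus sets. -/
def IsCut {n : ℕ} (S : Set (Fin n → ℝ)) : Prop :=
  (∀ x ∈ S, IsCube x) ∧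
  ((Submodule.span ℝ S : Set (Fin n → ℝ)) ∩ {x | IsCube x}) = S ∧
  ∀ x ∈ S, x ≠ 0 → (PlusSet x).Nonempty ∧ (MinusSet x).Nonempty
/-- The multiset of coordinates where `x` equals 1 (each appearing once). -/
noncomputable def plusM {n : ℕ} (x : Fin n → ℝ) : Multiset (Fin n) :=
  (Finset.univ.filter (fun i => x i = 1)).val

/-- The multiset of coordinates where `x` equals -1 (each appearing once). -/
noncomputable def minusM {n : ℕ} (x : Fin n → ℝ) : Multiset (Fin n) :=
  (Finset.univ.filter (fun i => x i = -1)).val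

/-- One step of the closure operation `⇓S` on collections of multisubsets of `[n]`:
(2) merge two blocks; (3) replace, inside one block, one copy of each element of
`Plus(x)` by one copy of each element of `Minus(x)`, for some `x ∈ S`. -/
inductive DownStep {n : ℕ} (S : Set (Fin n → ℝ)) :
    Multiset (Multiset (Fin n)) → Multiset (Multiset (Fin n)) → Prop
  | merge (B₁ B₂ : Multiset (Fin n)) (rest : Multiset (Multiset (Fin n))) :
      DownStep S (B₁ ::ₘ B₂ ::ₘ rest) ((B₁ + B₂) ::ₘ rest)
  | swap (B₁ : Multiset (Fin n)) (rest : Multiset (Multiset (Fin n))) (x : Fin n → ℝ)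
      (hx : x ∈ S) (hsub : plusM x ≤ B₁) :
      DownStep S (B₁ ::ₘ rest) ((B₁ - plusM x + minusM x) ::ₘ rest)

/-- A multiset of multisets of `[n]` which is an honest partition of `[n]`:
all blocks nonempty, globally no repetitions, and every element covered. -/
def IsPartitionM {n : ℕ} (A : Multiset (Multiset (Fin n))) : Prop :=
  (∀ B ∈ A, B ≠ 0) ∧ A.sum.Nodup ∧ ∀ i : Fin n, i ∈ A.sum

/-- `π ↓ S`: the set of honest partitions of `[n]` reachable from `π` by `⇓S`-steps. -/
def downClos {n : ℕ} (S : Set (Fin n → ℝ)) (π : Multiset (Multiset (Fin n))) :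
    Set (Multiset (Multiset (Fin n))) :=
  {ρ | IsPartitionM ρ ∧ Relation.ReflTransGen (DownStep S) π ρ}

/-- The partition of `[n]` whose only non-singleton blocks are `Plus(s)` and `Minus(s)`. -/
noncomputable def partOf {n : ℕ} (s : Fin n → ℝ) : Multiset (Multiset (Fin n)) :=
  plusM s ::ₘ minusM s ::ₘ
    ((Finset.univ.filter (fun i => s i = 0)).val.map (fun i => ({i} : Multiset (Fin n))))

/-- `S ∖ Π`: remove from `S` every element `s` whose associated partition
(non-singleton blocks `Plus(s)`, `Minus(s)`) lies in `Π`. -/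
noncomputable def cutMinus {n : ℕ} (S : Set (Fin n → ℝ))
    (P : Set (Multiset (Multiset (Fin n)))) : Set (Fin n → ℝ) :=
  {s | s ∈ S ∧ partOf s ∉ P}

/-- The partition of `[n]` whose only (potentially) non-singleton block is `A`. -/
def onlyBlock {n : ℕ} (A : Finset (Fin n)) : Multiset (Multiset (Fin n)) :=
  A.val ::ₘ ((Finset.univ \ A).val.map (fun i => ({i} : Multiset (Fin n))))

/-- Restriction of a partition of `[n]` to the first `l` coordinates `{0,…,l-1}`. -/
def restrictFirst {n : ℕ} (l : ℕ) (ρ : Multiset (Multiset (Fin n))) :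
    Multiset (Multiset (Fin l)) :=
  (ρ.map (fun B => B.filterMap
    (fun i => if h : (i : ℕ) < l then some (⟨(i : ℕ), h⟩ : Fin l) else none))).filter
    (fun B => B ≠ 0)

/-- A sequence `λ : [n] → ℕ` is sequential if whenever `Σ_{i∈I} λ_i = Σ_{j∈J} λ_j`
and `q ∈ I` is the maximum of `I ∪ J`, some subset `J' ⊆ J` has `Σ_{j∈J'} λ_j = λ_q`. -/
def IsSequentialSeq {n : ℕ} (lam : Fin n → ℕ) : Prop :=
  ∀ I J : Finset (Fin n), ∑ i ∈ I, lam i = ∑ j ∈ J, lam j →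
    ∀ q ∈ I, (∀ p ∈ I ∪ J, p ≤ q) → ∃ J' ⊆ J, lam q = ∑ j ∈ J', lam j

/-- `A` is lexicographically larger than `B`: either `B ⊆ A`, or, writing the elements
increasingly, the largest `q` elements agree and the next one of `A` is bigger. -/
def LexLarger {n : ℕ} (A B : Finset (Fin n)) : Prop :=
  B ⊆ A ∨ ∃ q : ℕ, q < min A.card B.card ∧
    (∀ i : ℕ, i < q →
      (A.sort (· ≤ ·))[A.card - 1 - i]? = (B.sort (· ≤ ·))[B.card - 1 - i]?) ∧
    ∃ x y : Fin n, (A.sort (· ≤ ·))[A.card - 1 - q]? = some x ∧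
      (B.sort (· ≤ ·))[B.card - 1 - q]? = some y ∧ y < x

/-- A subset `I` of `[n+1]` with at least two elements whose `λ`-sum is the last
(largest) part of `λ`. -/
def GoodSet {n : ℕ} (lam : Fin (n + 1) → ℕ) (I : Finset (Fin (n + 1))) : Prop :=
  2 ≤ I.card ∧ ∑ i ∈ I, lam i = lam (Fin.last n)

/-- `I` is the set `I(λ)`: a good set which is lexicographically larger than every
other good set. -/
def IsIlam {n : ℕ} (lam : Fin (n + 1) → ℕ) (I : Finset (Fin (n + 1))) : Prop :=
  GoodSet lam I ∧ ∀ J, GoodSet lam J → LexLarger I J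

/-- A sequential `λ` is strongly sequential if either no good set exists, or `I(λ)`
exists and, with `q = max I(λ)`, some `J ⊆ I(λ) ∖ {q}` has `Σ_{j∈J} λ_j = λ_q`. -/
def StronglySequential {n : ℕ} (lam : Fin (n + 1) → ℕ) : Prop :=
  IsSequentialSeq lam ∧
  ((∀ I, ¬ GoodSet lam I) ∨
    ∃ I, IsIlam lam I ∧ ∃ q ∈ I, (∀ p ∈ I, p ≤ q) ∧
      ∃ J ⊆ I.erase q, lam q = ∑ j ∈ J, lam j)

/-- The cut associated to a sequence `λ`: cube vectors orthogonal to `λ`. -/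
noncomputable def cutOf {n : ℕ} (lam : Fin n → ℕ) : Set (Fin n → ℝ) :=
  {x | IsCube x ∧ ∑ i, (lam i : ℝ) * x i = 0}

/-- The block of colour `j` of a colouring `f`. -/
def colourBlock {n : ℕ} {κ : Type*} [DecidableEq κ] (f : Fin n → κ) (j : κ) :
    Multiset (Fin n) :=
  (Finset.univ.filter (fun i => f i = j)).val

/-- The multiset of all blocks (possibly empty) of a colouring `f`. -/
def colourBlocks {n : ℕ} {κ : Type*} [DecidableEq κ] [Fintype κ] (f : Fin n → κ) :
    Multiset (Multiset (Fin n)) :=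
  (Finset.univ : Finset κ).val.map (colourBlock f)

/-- Two colourings have the same total weight in every colour. -/
def SameWeights {n : ℕ} {κ : Type*} [DecidableEq κ] (lam : Fin n → ℕ) (f g : Fin n → κ) :
    Prop :=
  ∀ j, ∑ i with f i = j, lam i = ∑ i with g i = j, lam i

/-- The total weight of a multiset. -/
def weight {n : ℕ} (lam : Fin n → ℕ) (B : Multiset (Fin n)) : ℕ := (B.map lam).sum

section Weight

variable {n : ℕ} {lam : Fin n → ℕ}

lemma weight_add (A B : Multiset (Fin n)) : weight lam (A + B) = weight lam A + weight lam B := by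
  simp [weight]

lemma weight_val (A : Finset (Fin n)) : weight lam A.val = ∑ i ∈ A, lam i := rfl

lemma weight_ne_zero_iff (hpos : ∀ i, 0 < lam i) (B : Multiset (Fin n)) :
    weight lam B ≠ 0 ↔ B ≠ 0 := by
  induction B using Multiset.induction_on with
  | empty => simp [weight]
  | cons a s _ => have := hpos a; simp [weight]; omega

lemma SameWeights.trans {κ : Type*} [DecidableEq κ] {f g h : Fin n → κ}
    (hfg : SameWeights lam f g) (hgh : SameWeights lam g h) : SameWeights lam f h :=
  fun j => (hfg j).trans (hgh j)

lemma weight_plusM_eq_weight_minusM {x : Fin n → ℝ} (hx : x ∈ cutOf lam) :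
    weight lam (plusM x) = weight lam (minusM x) := by
  obtain ⟨hc, hs⟩ := hx
  have key : ∀ i, (lam i : ℝ) * x i =
      (if x i = 1 then (lam i : ℝ) else 0) - (if x i = -1 then (lam i : ℝ) else 0) := by
    intro i
    rcases hc i with h | h | h <;> rw [h] <;> norm_num
  simp_rw [key, Finset.sum_sub_distrib, ← Finset.sum_filter] at hs
  have : (weight lam (plusM x) : ℝ) = weight lam (minusM x) := by
    unfold plusM minusM
    rw [weight_val, weight_val]
    push_cast
    linarith
  exact_mod_cast this

lemma weight_sub_plusM_add_minusM (B : Multiset (Fin n)) {x : Fin n → ℝ} (hx : x ∈ cutOf lam)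
    (hsub : plusM x ≤ B) : weight lam (B - plusM x + minusM x) = weight lam B := by
  conv_rhs => rw [← tsub_add_cancel_of_le hsub]
  rw [weight_add, weight_add, weight_plusM_eq_weight_minusM hx]

end Weight

section Steps

variable {n : ℕ} {S : Set (Fin n → ℝ)}

lemma reach_merge_singletons (rest : Multiset (Multiset (Fin n))) (B M : Multiset (Fin n)) :
    Relation.ReflTransGen (DownStep S) (B ::ₘ (M.map (fun i => ({i} : Multiset (Fin n))) + rest))
      ((B + M) ::ₘ rest) := by
  induction M using Multiset.induction_on generalizing B with
  | empty => simpa using Relation.ReflTransGen.refl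
  | cons a M ih =>
    have h := ih (B + {a})
    have e : B + {a} + M = B + a ::ₘ M := by
      rw [add_assoc, Multiset.singleton_add]
    rw [e] at h
    refine Relation.ReflTransGen.head ?_ h
    rw [Multiset.map_cons, Multiset.cons_add]
    exact DownStep.merge B {a} _

lemma reach_of_blocks (P rest : Multiset (Multiset (Fin n))) (hP : ∀ B ∈ P, B ≠ 0) :
    Relation.ReflTransGen (DownStep S) (P.sum.map (fun i => ({i} : Multiset (Fin n))) + rest)
      (P + rest) := by
  induction P using Multiset.induction_on generalizing rest with
  | empty => simpa using Relation.ReflTransGen.refl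
  | cons B P ih =>
    obtain ⟨a, ha⟩ := Multiset.exists_mem_of_ne_zero (hP B (by simp))
    obtain ⟨M, rfl⟩ := Multiset.exists_cons_of_mem ha
    have h₁ := reach_merge_singletons (S := S)
      (P.sum.map (fun i => ({i} : Multiset (Fin n))) + rest) {a} M
    have h₂ := ih ((a ::ₘ M) ::ₘ rest) (fun B hB => hP B (by simp [hB]))
    rw [Multiset.singleton_add] at h₁
    rw [Multiset.add_cons, Multiset.add_cons, ← Multiset.cons_add _ P] at h₂
    refine Relation.ReflTransGen.trans ?_ h₂
    rw [Multiset.sum_cons, Multiset.map_add, Multiset.map_cons, Multiset.cons_add,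
      Multiset.cons_add, add_assoc]
    exact h₁

lemma reach_coarsening {A : Finset (Fin n)} {P : Multiset (Multiset (Fin n))}
    (hP : ∀ B ∈ P, B ≠ 0) (hsum : P.sum = Finset.univ.val) (hA : ∃ B ∈ P, A.val ≤ B) :
    Relation.ReflTransGen (DownStep S) (onlyBlock A) P := by
  obtain ⟨B, hB, hAB⟩ := hA
  obtain ⟨P, rfl⟩ := Multiset.exists_cons_of_mem hB
  have hdiff : (Finset.univ \ A).val = (B - A.val) + P.sum := by
    rw [Finset.sdiff_val, ← hsum, Multiset.sum_cons]
    ext i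
    have := Multiset.le_iff_count.1 hAB i
    simp only [Multiset.count_sub, Multiset.count_add]
    omega
  have h₁ := reach_merge_singletons (S := S)
    (P.sum.map (fun i => ({i} : Multiset (Fin n)))) A.val (B - A.val)
  rw [add_tsub_cancel_of_le hAB] at h₁
  unfold onlyBlock
  rw [hdiff, Multiset.map_add]
  refine h₁.trans ?_
  have h₂ := reach_of_blocks (S := S) P {B} (fun B hB => hP B (by simp [hB]))
  rwa [add_comm, Multiset.singleton_add, add_comm, Multiset.singleton_add] at h₂

lemma step_of_weight_eq {lam : Fin n → ℕ} {B D : Finset (Fin n)}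
    (h : ∑ i ∈ B, lam i = ∑ i ∈ D, lam i) (rest : Multiset (Multiset (Fin n))) :
    DownStep (cutOf lam) (B.val ::ₘ rest) (D.val ::ₘ rest) := by
  classical
  let x : Fin n → ℝ := fun i => (if i ∈ B then 1 else 0) - (if i ∈ D then 1 else 0)
  have hplus : plusM x = B.val - D.val := by
    rw [← Finset.sdiff_val]
    unfold plusM
    congr 1
    ext i
    by_cases h₁ : i ∈ B <;> by_cases h₂ : i ∈ D <;> norm_num [x, h₁, h₂]
  have hminus : minusM x = D.val - B.val := by
    rw [← Finset.sdiff_val]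
    unfold minusM
    congr 1
    ext i
    by_cases h₁ : i ∈ B <;> by_cases h₂ : i ∈ D <;> norm_num [x, h₁, h₂]
  have hx : x ∈ cutOf lam := by
    refine ⟨fun i => ?_, ?_⟩
    · by_cases h₁ : i ∈ B <;> by_cases h₂ : i ∈ D <;> norm_num [x, h₁, h₂]
    · simp only [x, mul_sub, mul_ite, mul_one, mul_zero, Finset.sum_sub_distrib,
        Finset.sum_ite_mem, Finset.univ_inter]
      rw [sub_eq_zero]
      exact_mod_cast h
  have hstep := DownStep.swap B.val rest x hx (by rw [hplus]; exact tsub_le_self)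
  have e : B.val - plusM x + minusM x = D.val := by
    rw [hplus, hminus]
    ext i
    simp only [Multiset.count_sub, Multiset.count_add]
    omega
  rwa [e] at hstep

lemma reach_sameWeights {κ : Type*} [DecidableEq κ] {lam : Fin n → ℕ} {f g : Fin n → κ}
    (h : SameWeights lam f g) (K : Multiset κ) (rest : Multiset (Multiset (Fin n))) :
    Relation.ReflTransGen (DownStep (cutOf lam)) (K.map (colourBlock f) + rest)
      (K.map (colourBlock g) + rest) := by
  induction K using Multiset.induction_on generalizing rest with
  | empty => simpa using Relation.ReflTransGen.refl
  | cons j K ih =>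
    have h₂ := ih (colourBlock g j ::ₘ rest)
    rw [Multiset.map_cons, Multiset.map_cons, Multiset.cons_add, Multiset.cons_add]
    rw [Multiset.add_cons, Multiset.add_cons] at h₂
    exact Relation.ReflTransGen.head (step_of_weight_eq (h j) _) h₂

end Steps

section Colourings

variable {n : ℕ}

/-- A family of blocks whose total sum is `univ` comes from a colouring. -/
lemma exists_colouring {κ : Type*} [DecidableEq κ] (K : Finset κ) (b : κ → Multiset (Fin n))
    (hb : ∑ j ∈ K, b j = Finset.univ.val) :
    ∃ f : Fin n → κ, (∀ i, f i ∈ K) ∧ ∀ j ∈ K, colourBlock f j = b j := by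
  have hmem : ∀ i, ∃ j ∈ K, i ∈ b j := by
    intro i
    have : i ∈ ∑ j ∈ K, b j := by rw [hb]; exact Finset.mem_univ i
    simpa using this
  choose f hf hfb using hmem
  have hcount : ∀ i, ∑ j ∈ K, (b j).count i = 1 := by
    intro i
    rw [← Multiset.count_sum', hb]
    exact Multiset.count_eq_one_of_mem Finset.univ.nodup (Finset.mem_univ i)
  refine ⟨f, hf, fun j hj => ?_⟩
  ext i
  have h1 := hcount i
  rw [← Finset.add_sum_erase _ _ (hf i)] at h1
  have h2 := Multiset.count_pos.2 (hfb i)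
  unfold colourBlock
  by_cases hij : f i = j
  · subst hij
    rw [Multiset.count_eq_one_of_mem (Finset.nodup _) (by simp)]
    omega
  · rw [Multiset.count_eq_zero_of_notMem (by simp [hij])]
    have : (b j).count i ≤ ∑ j ∈ K.erase (f i), (b j).count i :=
      Finset.single_le_sum (f := fun j => (b j).count i) (fun _ _ => Nat.zero_le _)
        (Finset.mem_erase.2 ⟨Ne.symm hij, hj⟩)
    omega

lemma colourBlocks_sum {κ : Type*} [DecidableEq κ] [Fintype κ] (f : Fin n → κ) :
    (colourBlocks f).sum = Finset.univ.val := by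
  unfold colourBlocks
  change ∑ j, colourBlock f j = _
  ext i
  rw [Multiset.count_sum', Multiset.count_eq_one_of_mem Finset.univ.nodup (Finset.mem_univ i),
    Finset.sum_eq_single (f i)]
  · exact Multiset.count_eq_one_of_mem (Finset.nodup _) (by simp [colourBlock])
  · intro j _ hj
    exact Multiset.count_eq_zero_of_notMem (by simpa [colourBlock] using Ne.symm hj)
  · simp

lemma isPartitionM_iff (A : Multiset (Multiset (Fin n))) :
    IsPartitionM A ↔ (∀ B ∈ A, B ≠ 0) ∧ A.sum = Finset.univ.val := by
  refine and_congr_right fun _ => ⟨fun ⟨hn, hm⟩ => ?_, fun h => ?_⟩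
  · exact (Multiset.Nodup.ext hn Finset.univ.nodup).2 (fun i => ⟨fun _ => Finset.mem_univ i, fun _ => hm i⟩)
  · rw [h]
    exact ⟨Finset.univ.nodup, fun i => Finset.mem_univ i⟩

lemma sum_filter_ne_zero (A : Multiset (Multiset (Fin n))) :
    (A.filter (fun B => B ≠ 0)).sum = A.sum := by
  induction A using Multiset.induction_on with
  | empty => simp
  | cons B A ih =>
    by_cases h : B = 0
    · rw [Multiset.filter_cons_of_neg (p := fun B => B ≠ 0) _ (not_not.2 h), Multiset.sum_cons, ih, h, zero_add]
    · rw [Multiset.filter_cons_of_pos (p := fun B => B ≠ 0) _ h, Multiset.sum_cons, ih, Multiset.sum_cons]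

lemma isPartitionM_filter_colourBlocks {κ : Type*} [DecidableEq κ] [Fintype κ] (f : Fin n → κ) :
    IsPartitionM ((colourBlocks f).filter (fun B => B ≠ 0)) := by
  rw [isPartitionM_iff, sum_filter_ne_zero, colourBlocks_sum]
  exact ⟨fun B hB => (Multiset.mem_filter.1 hB).2, rfl⟩

lemma IsPartitionM.filter_ne_zero {A : Multiset (Multiset (Fin n))} (hA : IsPartitionM A) :
    A.filter (fun B => B ≠ 0) = A :=
  Multiset.filter_eq_self.2 fun B hB => hA.1 B hB

lemma IsPartitionM.exists_colouring {A : Multiset (Multiset (Fin n))} (hA : IsPartitionM A) :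
    ∃ (k : ℕ) (f : Fin n → Fin k), A = colourBlocks f := by
  have hA' : A = (Finset.univ : Finset (Fin A.toList.length)).val.map A.toList.get := by
    rw [Fin.univ_val_map, List.ofFn_get, Multiset.coe_toList]
  have hs := ((isPartitionM_iff A).1 hA).2
  obtain ⟨f, -, hf⟩ := _root_.exists_colouring Finset.univ A.toList.get
    (by rw [← hs]; conv_rhs => rw [hA']
        rfl)
  refine ⟨_, f, ?_⟩
  conv_lhs => rw [hA']
  exact Multiset.map_congr rfl fun j _ => (hf j (Finset.mem_univ j)).symm

/-- Equality of images of a multiset and a finset lifts to a labelling. -/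
lemma exists_labelling {α β κ : Type*} [DecidableEq κ] [Inhabited α] (w : α → β) (W : κ → β)
    (K : Finset κ) (P : Multiset α) (h : P.map w = K.val.map W) :
    ∃ b : κ → α, P = K.val.map b ∧ ∀ j ∈ K, w (b j) = W j := by
  induction K using Finset.induction_on generalizing P with
  | empty => exact ⟨fun _ => default, by simpa using h, by simp⟩
  | insert a K ha ih =>
    rw [Finset.insert_val_of_notMem ha, Multiset.map_cons] at h
    obtain ⟨B, hB, hw⟩ := Multiset.mem_map.1 (h ▸ Multiset.mem_cons_self (W a) _ : W a ∈ P.map w)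
    obtain ⟨P, rfl⟩ := Multiset.exists_cons_of_mem hB
    rw [Multiset.map_cons, hw, Multiset.cons_inj_right] at h
    obtain ⟨b, hb, hbw⟩ := ih P h
    have hne : ∀ j ∈ K, j ≠ a := fun j hj e => ha (e ▸ hj)
    refine ⟨Function.update b a B, ?_, ?_⟩
    · rw [Finset.insert_val_of_notMem ha, Multiset.map_cons, Function.update_self, hb]
      congr 1
      exact Multiset.map_congr rfl fun j hj => (Function.update_of_ne (hne j hj) _ _).symm
    · intro j hj
      rcases Finset.mem_insert.1 hj with rfl | hj
      · simpa using hw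
      · rw [Function.update_of_ne (hne j hj)]
        exact hbw j hj

lemma reach_invariant {lam : Fin n → ℕ} {A : Finset (Fin n)} {ρ : Multiset (Multiset (Fin n))}
    (h : Relation.ReflTransGen (DownStep (cutOf lam)) (onlyBlock A) ρ) :
    ∃ P : Multiset (Multiset (Fin n)), P.sum = Finset.univ.val ∧ (∃ B ∈ P, A.val ≤ B) ∧
      P.map (weight lam) = ρ.map (weight lam) := by
  induction h with
  | refl =>
    refine ⟨onlyBlock A, ?_, ⟨A.val, by simp [onlyBlock], le_rfl⟩, rfl⟩
    rw [onlyBlock, Multiset.sum_cons, Multiset.sum_map_singleton, Finset.sdiff_val]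
    exact add_tsub_cancel_of_le (Finset.val_le_iff.2 (Finset.subset_univ A))
  | tail _ hstep ih =>
    obtain ⟨P, hP, hA, hw⟩ := ih
    cases hstep with
    | merge B₁ B₂ rest =>
      rw [Multiset.map_cons, Multiset.map_cons] at hw
      obtain ⟨C₁, hC₁, e₁⟩ := Multiset.mem_map.1
        (hw ▸ Multiset.mem_cons_self _ _ : weight lam B₁ ∈ P.map (weight lam))
      obtain ⟨P, rfl⟩ := Multiset.exists_cons_of_mem hC₁
      rw [Multiset.map_cons, e₁, Multiset.cons_inj_right] at hw
      obtain ⟨C₂, hC₂, e₂⟩ := Multiset.mem_map.1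
        (hw ▸ Multiset.mem_cons_self _ _ : weight lam B₂ ∈ P.map (weight lam))
      obtain ⟨P, rfl⟩ := Multiset.exists_cons_of_mem hC₂
      rw [Multiset.map_cons, e₂, Multiset.cons_inj_right] at hw
      refine ⟨(C₁ + C₂) ::ₘ P, ?_, ?_, ?_⟩
      · rw [← hP]; simp [add_assoc]
      · obtain ⟨B, hB, hAB⟩ := hA
        rcases Multiset.mem_cons.1 hB with rfl | hB
        · exact ⟨_, Multiset.mem_cons_self _ _, hAB.trans (Multiset.le_add_right _ _)⟩
        rcases Multiset.mem_cons.1 hB with rfl | hB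
        · exact ⟨_, Multiset.mem_cons_self _ _, hAB.trans (Multiset.le_add_left _ _)⟩
        exact ⟨B, Multiset.mem_cons_of_mem hB, hAB⟩
      · rw [Multiset.map_cons, Multiset.map_cons, weight_add, weight_add, e₁, e₂, hw]
    | swap B₁ rest x hx hsub =>
      refine ⟨P, hP, hA, ?_⟩
      rw [hw, Multiset.map_cons, Multiset.map_cons, weight_sub_plusM_add_minusM B₁ hx hsub]

/-- Membership in `π ↓ S_λ` in terms of colourings and weights. -/
lemma mem_downClos_iff {κ : Type*} [DecidableEq κ] [Fintype κ] {lam : Fin n → ℕ}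
    (hpos : ∀ i, 0 < lam i) {A : Finset (Fin n)} (hA : A.Nonempty) (g : Fin n → κ) :
    (colourBlocks g).filter (fun B => B ≠ 0) ∈ downClos (cutOf lam) (onlyBlock A) ↔
      ∃ f : Fin n → κ, (∃ j, ∀ i ∈ A, f i = j) ∧ SameWeights lam f g := by
  classical
  have hfilter : ∀ f : Fin n → κ, (colourBlocks f).filter (fun B => B ≠ 0) =
      (Finset.univ.filter (fun j => colourBlock f j ≠ 0)).val.map (colourBlock f) := by
    intro f
    rw [colourBlocks, Multiset.filter_map]
    rfl
  constructor
  · rintro ⟨-, hreach⟩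
    obtain ⟨P, hP, ⟨B, hB, hAB⟩, hw⟩ := reach_invariant hreach
    rw [hfilter, Multiset.map_map] at hw
    obtain ⟨b, rfl, hbw⟩ := exists_labelling _ _ _ _ hw
    obtain ⟨f, hfK, hf⟩ := exists_colouring _ b hP
    refine ⟨f, ?_, fun j => ?_⟩
    · obtain ⟨j, hj, rfl⟩ := Multiset.mem_map.1 hB
      refine ⟨j, fun i hi => ?_⟩
      have : i ∈ colourBlock f j := by
        rw [hf j hj]
        exact Multiset.mem_of_le hAB hi
      simpa [colourBlock] using this
    · by_cases hj : j ∈ Finset.univ.filter (fun j => colourBlock g j ≠ 0)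
      · have := hbw j hj
        rw [← hf j hj] at this
        exact this
      · have h1 : colourBlock g j = 0 := by simpa using hj
        have h2 : Finset.univ.filter (fun i => f i = j) = ∅ :=
          Finset.filter_eq_empty_iff.2 fun i _ e => hj (e ▸ hfK i)
        have h3 : Finset.univ.filter (fun i => g i = j) = ∅ := Finset.val_eq_zero.1 h1
        rw [h2, h3]
  · rintro ⟨f, ⟨j, hj⟩, hw⟩
    refine ⟨isPartitionM_filter_colourBlocks g, ?_⟩
    have hpf := (isPartitionM_iff _).1 (isPartitionM_filter_colourBlocks f)
    have h1 : Relation.ReflTransGen (DownStep (cutOf lam)) (onlyBlock A)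
        ((colourBlocks f).filter (fun B => B ≠ 0)) := by
      refine reach_coarsening hpf.1 hpf.2 ⟨colourBlock f j, ?_, ?_⟩
      · refine Multiset.mem_filter.2 ⟨Multiset.mem_map_of_mem _ (Finset.mem_univ j), ?_⟩
        obtain ⟨i, hi⟩ := hA
        intro h0
        have : i ∈ colourBlock f j := by simp [colourBlock, hj i hi]
        simp [h0] at this
      · exact Finset.val_le_iff.2 fun i hi => by simp [hj i hi]
    refine h1.trans ?_
    rw [hfilter, hfilter]
    have hK : (fun j => colourBlock f j ≠ 0) = (fun j => colourBlock g j ≠ 0) := by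
      funext j
      rw [← weight_ne_zero_iff hpos, ← weight_ne_zero_iff hpos]
      exact congrArg (· ≠ 0) (hw j)
    simp_rw [hK]
    simpa using reach_sameWeights hw (Finset.univ.filter (fun j => colourBlock g j ≠ 0)).val 0

end Colourings

section Exchange

variable {n : ℕ} {κ : Type*} [DecidableEq κ] {lam : Fin n → ℕ}

/-- Recolour `J` with the colour of `t`, and `t` with the colour `j`. -/
def exchange (f : Fin n → κ) (J : Finset (Fin n)) (t : Fin n) (j : κ) (i : Fin n) : κ :=
  if i ∈ J then f t else if i = t then j else f i

lemma exchange_sameWeights {f : Fin n → κ} {J : Finset (Fin n)} {t : Fin n} {j : κ}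
    (ht : t ∉ J) (hJ : ∀ i ∈ J, f i = j) (hw : ∑ i ∈ J, lam i = lam t) :
    SameWeights lam (exchange f J t j) f := by
  intro c
  have key : ∀ h : Fin n → κ, ∑ i with h i = c, lam i =
      ∑ i ∈ J, (if h i = c then lam i else 0) + ((if h t = c then lam t else 0) +
        ∑ i ∈ (insert t J)ᶜ, (if h i = c then lam i else 0)) := by
    intro h
    rw [Finset.sum_filter, ← Finset.sum_add_sum_compl (insert t J), Finset.sum_insert ht]
    ring
  rw [key, key]
  have h1 : ∑ i ∈ J, (if exchange f J t j i = c then lam i else 0) =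
      if f t = c then lam t else 0 := by
    rw [← hw]
    split_ifs with h
    · exact Finset.sum_congr rfl fun i hi => by simp [exchange, hi, h]
    · exact Finset.sum_eq_zero fun i hi => by simp [exchange, hi, h]
  have h2 : ∑ i ∈ J, (if f i = c then lam i else 0) = if j = c then lam t else 0 := by
    rw [← hw]
    split_ifs with h
    · exact Finset.sum_congr rfl fun i hi => by simp [hJ i hi, h]
    · exact Finset.sum_eq_zero fun i hi => by simp [hJ i hi, h]
  have h3 : ∑ i ∈ (insert t J)ᶜ, (if exchange f J t j i = c then lam i else 0) =
      ∑ i ∈ (insert t J)ᶜ, (if f i = c then lam i else 0) := by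
    refine Finset.sum_congr rfl fun i hi => ?_
    simp only [Finset.mem_compl, Finset.mem_insert, not_or] at hi
    simp [exchange, hi.1, hi.2]
  rw [h1, h2, h3]
  simp only [exchange, ht, if_false, if_true]
  ring

end Exchange

section Lex

variable {n : ℕ}

/-- In the sorted list of `A`, an element above the one at depth `q` occurs at smaller depth. -/
lemma exists_depth_lt {A : Finset (Fin n)} {q : ℕ} {x p : Fin n} (hq : q < A.card)
    (hx : (A.sort (· ≤ ·))[A.card - 1 - q]? = some x) (hp : p ∈ A) (hxp : x < p) :
    ∃ i < q, (A.sort (· ≤ ·))[A.card - 1 - i]? = some p := by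
  obtain ⟨k, hk, rfl⟩ := List.mem_iff_getElem.1 ((Finset.mem_sort (· ≤ ·)).2 hp)
  obtain ⟨hk', rfl⟩ := List.getElem?_eq_some_iff.1 hx
  have hlt := ((Finset.sortedLT_sort A).strictMono_get.lt_iff_lt
    (a := ⟨A.card - 1 - q, hk'⟩) (b := ⟨k, hk⟩)).1 hxp
  have hlen : (A.sort (· ≤ ·)).length = A.card := Finset.length_sort _
  simp only [Fin.mk_lt_mk] at hlt
  refine ⟨A.card - 1 - k, by omega, ?_⟩
  have : A.card - 1 - (A.card - 1 - k) = k := by omega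
  rw [this]
  exact List.getElem?_eq_getElem hk

lemma mem_of_sort_getElem? {A : Finset (Fin n)} {k : ℕ} {p : Fin n}
    (h : (A.sort (· ≤ ·))[k]? = some p) : p ∈ A :=
  (Finset.mem_sort (· ≤ ·)).1 (List.mem_of_getElem? h)

/-- If `A` is lexicographically larger than `B` without containing it, then the largest
element of the symmetric difference belongs to `A`. -/
lemma LexLarger.exists_max {A B : Finset (Fin n)} (h : LexLarger A B) (hBA : ¬ B ⊆ A) :
    ∃ x ∈ A, x ∉ B ∧ ∀ p, x < p → (p ∈ A ↔ p ∈ B) := by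
  obtain h | ⟨q, hq, hag, x, y, hx, hy, hyx⟩ := h
  · exact absurd h hBA
  have hqA : q < A.card := hq.trans_le (min_le_left _ _)
  have hqB : q < B.card := hq.trans_le (min_le_right _ _)
  refine ⟨x, mem_of_sort_getElem? hx, fun hxB => ?_, fun p hp => ⟨fun hpA => ?_, fun hpB => ?_⟩⟩
  · obtain ⟨i, hi, hxi⟩ := exists_depth_lt hqB hy hxB hyx
    rw [← hag i hi] at hxi
    obtain ⟨h₁, e₁⟩ := List.getElem?_eq_some_iff.1 hx
    obtain ⟨h₂, e₂⟩ := List.getElem?_eq_some_iff.1 hxi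
    have := (List.Nodup.getElem_inj_iff (Finset.sort_nodup A (· ≤ ·))).1 (e₁.trans e₂.symm)
    omega
  · obtain ⟨i, hi, hpi⟩ := exists_depth_lt hqA hx hpA hp
    rw [hag i hi] at hpi
    exact mem_of_sort_getElem? hpi
  · obtain ⟨i, hi, hpi⟩ := exists_depth_lt hqB hy hpB (hyx.trans hp)
    rw [← hag i hi] at hpi
    exact mem_of_sort_getElem? hpi

end Lex

section Sequential

variable {n : ℕ} {lam : Fin (n + 1) → ℕ}

lemma lam_lt_of_mem_good (hpos : ∀ i, 0 < lam i) {J : Finset (Fin (n + 1))} (hJ : GoodSet lam J)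
    {i : Fin (n + 1)} (hi : i ∈ J) : lam i < lam (Fin.last n) := by
  rw [← hJ.2, ← Finset.add_sum_erase _ _ hi]
  have hne : (J.erase i).Nonempty := by
    rw [← Finset.card_pos, Finset.card_erase_of_mem hi]
    have := hJ.1
    omega
  have := Finset.sum_pos (fun k _ => hpos k) hne
  omega

lemma good_of_sum_eq {J : Finset (Fin (n + 1))} (hpos : ∀ i, 0 < lam i)
    (hlow : ∀ i ∈ J, lam i ≠ lam (Fin.last n)) (hJ : ∑ i ∈ J, lam i = lam (Fin.last n)) :
    GoodSet lam J := by
  refine ⟨?_, hJ⟩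
  by_contra hlt
  rcases Nat.lt_succ_iff_lt_or_eq.1 (not_le.1 hlt) with h | h
  · have h0 : J = ∅ := Finset.card_eq_zero.1 (by omega)
    have := hpos (Fin.last n)
    rw [h0, Finset.sum_empty] at hJ
    omega
  · obtain ⟨a, rfl⟩ := Finset.card_eq_one.1 h
    exact hlow a (by simp) (by simpa using hJ)

/-- A colouring with a block containing a good set can be recoloured, keeping all weights, so
that `I(λ)` lies in a single block. -/
lemma exists_recolouring_of_good (hpos : ∀ i, 0 < lam i) (hseq : IsSequentialSeq lam)
    {I : Finset (Fin (n + 1))} (hI : IsIlam lam I) {κ : Type*} [DecidableEq κ] (N : ℕ) :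
    ∀ (g : Fin (n + 1) → κ) (j : κ) (J : Finset (Fin (n + 1))), GoodSet lam J →
      (∀ i ∈ J, g i = j) → (I \ J).card ≤ N →
      ∃ f : Fin (n + 1) → κ, (∃ j, ∀ i ∈ I, f i = j) ∧ SameWeights lam f g := by
  induction N with
  | zero =>
    intro g j J _ hgJ hcard
    have hIJ : I ⊆ J := Finset.sdiff_eq_empty_iff_subset.1 (Finset.card_eq_zero.1 (by omega))
    exact ⟨g, ⟨j, fun i hi => hgJ i (hIJ hi)⟩, fun _ => rfl⟩
  | succ N ih =>
    intro g j J hJ hgJ hcard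
    by_cases hIJ : I ⊆ J
    · exact ⟨g, ⟨j, fun i hi => hgJ i (hIJ hi)⟩, fun _ => rfl⟩
    have hJI : ¬ J ⊆ I := by
      intro hJI
      obtain ⟨a, haI, haJ⟩ := Finset.not_subset.1 hIJ
      have := Finset.sum_lt_sum_of_subset hJI haI haJ (hpos a) (fun k _ _ => Nat.zero_le (lam k))
      rw [hJ.2, hI.1.2] at this
      exact lt_irrefl _ this
    obtain ⟨x, hxI, hxJ, hmax⟩ := (hI.2 J hJ).exists_max hJI
    have hsum : ∑ i ∈ I \ J, lam i = ∑ i ∈ J \ I, lam i := by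
      have h1 := Finset.sum_inter_add_sum_sdiff I J lam
      have h2 := Finset.sum_inter_add_sum_sdiff J I lam
      rw [Finset.inter_comm] at h2
      have := hJ.2
      have := hI.1.2
      omega
    obtain ⟨J', hJ', hlx⟩ := hseq _ _ hsum x (by simp [hxI, hxJ]) (by
      intro p hp
      by_contra hlt
      have := hmax p (not_le.1 hlt)
      simp only [Finset.mem_union, Finset.mem_sdiff] at hp
      tauto)
    have hJ'J : J' ⊆ J := hJ'.trans Finset.sdiff_subset
    have hxJ' : x ∉ J' := fun h => hxJ (hJ'J h)
    have hlow : ∀ i ∈ insert x (J \ J'), lam i ≠ lam (Fin.last n) := by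
      intro i hi
      rcases Finset.mem_insert.1 hi with rfl | hi
      · exact (lam_lt_of_mem_good hpos hI.1 hxI).ne
      · exact (lam_lt_of_mem_good hpos hJ (Finset.mem_sdiff.1 hi).1).ne
    have hgood : GoodSet lam (insert x (J \ J')) := by
      refine good_of_sum_eq hpos hlow ?_
      rw [Finset.sum_insert (by simp [hxJ]), hlx, ← hJ.2, add_comm]
      exact Finset.sum_sdiff hJ'J
    have hex := exchange_sameWeights (lam := lam) (f := g) (j := j) hxJ'
      (fun i hi => hgJ i (hJ'J hi)) hlx.symm
    obtain ⟨f, hf, hfw⟩ := ih (exchange g J' x j) j _ hgood (by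
        intro i hi
        rcases Finset.mem_insert.1 hi with rfl | hi
        · simp [exchange, hxJ']
        · obtain ⟨hi1, hi2⟩ := Finset.mem_sdiff.1 hi
          simp [exchange, hi2, hgJ i hi1]) (by
        have hlt : (I \ insert x (J \ J')).card < (I \ J).card := by
          refine Finset.card_lt_card ((Finset.ssubset_iff_of_subset ?_).2 ⟨x, ?_, ?_⟩)
          · intro i hi
            simp only [Finset.mem_sdiff, Finset.mem_insert, not_or, not_and, not_not] at hi ⊢
            refine ⟨hi.1, fun hiJ => ?_⟩
            exact (Finset.mem_sdiff.1 (hJ' (hi.2.2 hiJ))).2 hi.1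
          · simp [hxI, hxJ]
          · simp
        omega)
    exact ⟨f, hf, hfw.trans hex⟩

/-- If `P` and `M` have the same weight and `P` has more parts equal to the largest one, then
`M` contains a good set. -/
lemma exists_good_subset (hpos : ∀ i, 0 < lam i) (hmono : Monotone lam)
    (hseq : IsSequentialSeq lam) {P M : Finset (Fin (n + 1))}
    (hw : ∑ i ∈ P, lam i = ∑ i ∈ M, lam i)
    (hcard : (M.filter (fun i => lam i = lam (Fin.last n))).card <
      (P.filter (fun i => lam i = lam (Fin.last n))).card) :
    ∃ J ⊆ M, GoodSet lam J := by
  obtain ⟨Q, hQ, hQc⟩ := Finset.exists_subset_card_eq hcard.le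
  have hQP : Q ⊆ P := hQ.trans (Finset.filter_subset _ _)
  have hQt : ∀ i ∈ Q, lam i = lam (Fin.last n) := fun i hi => (Finset.mem_filter.1 (hQ hi)).2
  have hsum : ∑ i ∈ P \ Q, lam i = ∑ i ∈ M with lam i ≠ lam (Fin.last n), lam i := by
    have h1 := Finset.sum_sdiff hQP (f := lam)
    have h2 := Finset.sum_filter_add_sum_filter_not M (fun i => lam i = lam (Fin.last n)) lam
    rw [Finset.sum_congr rfl hQt, Finset.sum_const, hQc] at h1
    rw [Finset.sum_congr rfl (fun i hi => (Finset.mem_filter.1 hi).2 :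
      ∀ i ∈ M.filter (fun i => lam i = lam (Fin.last n)), lam i = lam (Fin.last n)),
      Finset.sum_const] at h2
    simp only [ne_eq]
    omega
  obtain ⟨a, haP, haQ⟩ := Finset.exists_mem_notMem_of_card_lt_card (hQc ▸ hcard)
  have ha := Finset.mem_filter.1 haP
  have hne : (P \ Q).Nonempty := ⟨a, by simp [ha.1, haQ]⟩
  set q := (P \ Q).max' hne with hq
  have haq : a ≤ q := Finset.le_max' _ _ (by simp [ha.1, haQ])
  have hqtop : lam q = lam (Fin.last n) :=
    le_antisymm (hmono (Fin.le_last q)) (ha.2 ▸ hmono haq)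
  obtain ⟨J, hJ, hJw⟩ := hseq _ _ hsum q (Finset.max'_mem _ _) (by
    intro p hp
    rcases Finset.mem_union.1 hp with hp | hp
    · exact Finset.le_max' _ _ hp
    · by_contra hlt
      exact (Finset.mem_filter.1 hp).2
        (le_antisymm (hmono (Fin.le_last p)) (hqtop ▸ hmono (not_le.1 hlt).le)))
  exact ⟨J, hJ.trans (Finset.filter_subset _ _),
    good_of_sum_eq hpos (fun i hi => (Finset.mem_filter.1 (hJ hi)).2) (hJw.symm.trans hqtop)⟩

/-- A colouring constant on `I` can be modified, keeping all weights, so as to agree with a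
colouring of the same weights on all parts equal to the largest one. -/
lemma exists_agreeing_on_top (hpos : ∀ i, 0 < lam i) (hmono : Monotone lam)
    (hseq : IsSequentialSeq lam) {I : Finset (Fin (n + 1))} (hI : GoodSet lam I)
    {κ : Type*} [DecidableEq κ] (g : Fin (n + 1) → κ) (N : ℕ) :
    ∀ f : Fin (n + 1) → κ, (∃ j, ∀ i ∈ I, f i = j) → SameWeights lam f g →
      (Finset.univ.filter (fun t => lam t = lam (Fin.last n) ∧ f t ≠ g t)).card ≤ N →
      ∃ f' : Fin (n + 1) → κ, (∃ j, ∀ i ∈ I, f' i = j) ∧ SameWeights lam f' g ∧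
        ∀ t, lam t = lam (Fin.last n) → f' t = g t := by
  induction N with
  | zero =>
    intro f hfI hfg hcard
    refine ⟨f, hfI, hfg, fun t ht => ?_⟩
    have := Finset.card_eq_zero.1 (Nat.le_zero.1 hcard)
    by_contra hne
    exact Finset.filter_eq_empty_iff.1 this (Finset.mem_univ t) ⟨ht, hne⟩
  | succ N ih =>
    intro f hfI hfg hcard
    by_cases hall : ∀ t, lam t = lam (Fin.last n) → f t = g t
    · exact ⟨f, hfI, hfg, hall⟩
    push Not at hall
    obtain ⟨t, ht, hft⟩ := hall
    have htI : t ∉ I := fun h => (lam_lt_of_mem_good hpos hI h).ne ht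
    -- a subset of the block of colour `g t`, avoiding the matched parts, of the weight of `t`
    have hJ : ∃ J : Finset (Fin (n + 1)), (∀ i ∈ J, f i = g t) ∧
        (∀ i ∈ J, lam i = lam (Fin.last n) → f i ≠ g i) ∧
        ∑ i ∈ J, lam i = lam (Fin.last n) := by
      let C := Finset.univ.filter
        (fun i => lam i = lam (Fin.last n) ∧ f i = g t ∧ g i = g t)
      let U := Finset.univ.filter (fun i => f i = g t)
      let V := Finset.univ.filter (fun i => g i = g t)
      have hCU : C ⊆ U := fun i hi => by simp [C, U] at hi ⊢; exact hi.2.1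
      have hCV : C ⊆ V := fun i hi => by simp [C, V] at hi ⊢; exact hi.2.2
      have hsum : ∑ i ∈ V \ C, lam i = ∑ i ∈ U \ C, lam i := by
        have h1 := Finset.sum_sdiff hCU (f := lam)
        have h2 := Finset.sum_sdiff hCV (f := lam)
        have h3 : ∑ i ∈ U, lam i = ∑ i ∈ V, lam i := hfg (g t)
        omega
      have htV : t ∈ (V \ C) ∪ (U \ C) := by simp [V, C, hft]
      have hne : ((V \ C) ∪ (U \ C)).Nonempty := ⟨t, htV⟩
      have hUprop : ∀ i ∈ U \ C, f i = g t ∧ (lam i = lam (Fin.last n) → f i ≠ g i) := by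
        intro i hi
        simp only [U, C, Finset.mem_sdiff, Finset.mem_filter, Finset.mem_univ, true_and,
          not_and] at hi
        exact ⟨hi.1, fun h e => hi.2 h hi.1 (e ▸ hi.1)⟩
      set q := ((V \ C) ∪ (U \ C)).max' hne with hq
      have hqtop : lam q = lam (Fin.last n) :=
        le_antisymm (hmono (Fin.le_last q)) (ht ▸ hmono (Finset.le_max' _ _ htV))
      rcases Finset.mem_union.1 (Finset.max'_mem _ hne) with hqV | hqU
      · obtain ⟨J, hJ, hJw⟩ := hseq _ _ hsum q hqV (fun p hp => Finset.le_max' _ _ hp)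
        exact ⟨J, fun i hi => (hUprop i (hJ hi)).1, fun i hi => (hUprop i (hJ hi)).2,
          hJw.symm.trans hqtop⟩
      · exact ⟨{q}, by simpa using (hUprop q hqU).1, by simpa using (hUprop q hqU).2,
          by simpa using hqtop⟩
    have hJ' : ∃ J : Finset (Fin (n + 1)), (∀ i ∈ J, f i = g t) ∧
        (∀ i ∈ J, lam i = lam (Fin.last n) → f i ≠ g i) ∧
        ∑ i ∈ J, lam i = lam (Fin.last n) ∧ (J = I ∨ Disjoint J I) := by
      obtain ⟨J, h1, h2, h3⟩ := hJ
      by_cases hd : Disjoint J I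
      · exact ⟨J, h1, h2, h3, Or.inr hd⟩
      · obtain ⟨a, haJ, haI⟩ := Finset.not_disjoint_iff.1 hd
        obtain ⟨j, hj⟩ := hfI
        exact ⟨I, fun i hi => (hj i hi).trans ((hj a haI).symm.trans (h1 a haJ)),
          fun i hi h => absurd h (lam_lt_of_mem_good hpos hI hi).ne, hI.2, Or.inl rfl⟩
    obtain ⟨J, h1, h2, h3, h4⟩ := hJ'
    have htJ : t ∉ J := fun h => hft (h1 t h)
    have hex := exchange_sameWeights (lam := lam) htJ h1 (h3.trans ht.symm)
    refine ih (exchange f J t (g t)) ?_ (hex.trans hfg) ?_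
    · rcases h4 with rfl | hd
      · exact ⟨f t, fun i hi => by simp [exchange, hi]⟩
      · obtain ⟨j, hj⟩ := hfI
        refine ⟨j, fun i hi => ?_⟩
        have hiJ : i ∉ J := Finset.disjoint_right.1 hd hi
        have hit : i ≠ t := fun e => htI (e ▸ hi)
        simp [exchange, hiJ, hit, hj i hi]
    · refine Nat.lt_succ_iff.1 (lt_of_lt_of_le (Finset.card_lt_card
        ((Finset.ssubset_iff_of_subset ?_).2 ⟨t, ?_, ?_⟩)) hcard)
      · intro i hi
        simp only [Finset.mem_filter, Finset.mem_univ, true_and] at hi ⊢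
        refine ⟨hi.1, ?_⟩
        by_cases hiJ : i ∈ J
        · exact h2 i hiJ hi.1
        by_cases hit : i = t
        · rw [hit]; exact hft
        · simpa [exchange, hiJ, hit] using hi.2
      · simp [ht, hft]
      · intro hmem
        exact (Finset.mem_filter.1 hmem).2.2 (by simp [exchange, htJ])

end Sequential

section Restriction

variable {m l : ℕ}

lemma sum_eq_sum_castLE_add {M : Type*} [AddCommMonoid M] (hl : l ≤ m) (F : Fin m → M) :
    ∑ i, F i = ∑ i : Fin l, F (Fin.castLE hl i) + ∑ i ∈ Finset.univ.filter (fun i : Fin m => l ≤ (i : ℕ)), F i := by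
  rw [← Finset.sum_filter_not_add_sum_filter Finset.univ (fun i : Fin m => l ≤ (i : ℕ))]
  congr 1
  have : Finset.univ.filter (fun i : Fin m => ¬ l ≤ (i : ℕ)) =
      (Finset.univ : Finset (Fin l)).map (Fin.castLEEmb hl) := by
    ext i
    simp only [Finset.mem_filter, Finset.mem_univ, true_and, Finset.mem_map, not_le]
    exact ⟨fun h => ⟨⟨i, h⟩, by ext; rfl⟩, by rintro ⟨k, rfl⟩; exact k.2⟩
  rw [this, Finset.sum_map]
  rfl

/-- The element of `Fin l` with the same value as `i`, if there is one. -/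
def toFirst (l : ℕ) (i : Fin m) : Option (Fin l) :=
  if h : (i : ℕ) < l then some ⟨i, h⟩ else none

lemma restrictFirst_eq (ρ : Multiset (Multiset (Fin m))) :
    restrictFirst l ρ =
      (ρ.map (fun B => B.filterMap (toFirst l))).filter (fun B => B ≠ 0) := by
  unfold restrictFirst
  congr 2
  funext B
  simp only [Multiset.bind_def, Multiset.pure_def, Multiset.bind_singleton]
  rw [Multiset.filterMap_map]
  rfl

lemma filterMap_filter_univ (hl : l ≤ m) (p : Fin m → Prop) [DecidablePred p] :
    (Finset.univ.filter p).val.filterMap (toFirst l) =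
    (Finset.univ.filter (fun i : Fin l => p (Fin.castLE hl i))).val := by
  refine (Multiset.Nodup.ext (Multiset.Nodup.filterMap _ ?_ (Finset.nodup _))
    (Finset.nodup _)).2 fun k => ?_
  · intro a a' b hb hb'
    ext
    by_cases h : (a : ℕ) < l <;> by_cases h' : (a' : ℕ) < l <;> simp_all [toFirst]
    rw [← hb'] at hb
    simpa using hb
  · simp only [Multiset.mem_filterMap, Finset.mem_val, Finset.mem_filter, Finset.mem_univ, true_and]
    constructor
    · rintro ⟨a, ha, h⟩
      by_cases hal : (a : ℕ) < l
      · rw [toFirst, dif_pos hal, Option.some_inj] at h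
        subst h
        exact ha
      · simp [toFirst, hal] at h
    · exact fun h => ⟨_, h, by simp [toFirst]⟩

lemma restrictFirst_colourBlocks (hl : l ≤ m) {κ : Type*} [DecidableEq κ] [Fintype κ]
    (g : Fin m → κ) :
    restrictFirst l (colourBlocks g) =
      (colourBlocks (fun i => g (Fin.castLE hl i))).filter (fun B => B ≠ 0) := by
  unfold colourBlocks
  rw [restrictFirst_eq, Multiset.map_map]
  congr 1
  exact Multiset.map_congr rfl fun j _ => filterMap_filter_univ hl _

lemma filter_map_filterMap_singleton (φ : Fin m → Option (Fin l)) (M : Multiset (Fin m)) :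
    (M.map (fun i => ({i} : Multiset (Fin m)).filterMap φ)).filter (fun B => B ≠ 0) =
      (M.filterMap φ).map (fun i => ({i} : Multiset (Fin l))) := by
  induction M using Multiset.induction_on with
  | empty => simp
  | cons a M ih =>
    rw [Multiset.map_cons]
    have hs : ({a} : Multiset (Fin m)) = a ::ₘ 0 := rfl
    cases h : φ a with
    | none =>
      rw [Multiset.filterMap_cons_none _ _ h, ← ih, Multiset.filter_cons_of_neg]
      rw [hs, Multiset.filterMap_cons_none _ _ h]
      simp
    | some k =>
      rw [Multiset.filterMap_cons_some _ _ _ h, Multiset.map_cons, ← ih,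
        Multiset.filter_cons_of_pos]
      · rw [hs, Multiset.filterMap_cons_some _ _ _ h]
        simp
      · rw [hs, Multiset.filterMap_cons_some _ _ _ h]
        simp

lemma restrictFirst_partOf (hl : l ≤ m) (x : Fin m → ℝ) :
    restrictFirst l (partOf x) =
      (partOf (fun i => x (Fin.castLE hl i))).filter (fun B => B ≠ 0) := by
  unfold partOf plusM minusM
  rw [restrictFirst_eq, Multiset.map_cons, Multiset.map_cons, Multiset.map_map, filterMap_filter_univ hl,
    filterMap_filter_univ hl]
  have hs := filter_map_filterMap_singleton (toFirst l)
    (Finset.univ.filter (fun i => x i = 0)).val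
  rw [filterMap_filter_univ hl] at hs
  have hid : ((Finset.univ.filter (fun i : Fin l => x (Fin.castLE hl i) = 0)).val.map
      (fun i => ({i} : Multiset (Fin l)))).filter (fun B => B ≠ 0) =
      (Finset.univ.filter (fun i : Fin l => x (Fin.castLE hl i) = 0)).val.map
        (fun i => ({i} : Multiset (Fin l))) := by
    refine Multiset.filter_eq_self.2 fun B hB => ?_
    obtain ⟨i, -, rfl⟩ := Multiset.mem_map.1 hB
    simp
  simp only [← Multiset.singleton_add, Multiset.filter_add]
  rw [hid, ← hs]
  rfl

lemma partOf_sum {x : Fin m → ℝ} (hx : IsCube x) : (partOf x).sum = Finset.univ.val := by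
  unfold partOf plusM minusM
  rw [Multiset.sum_cons, Multiset.sum_cons, Multiset.sum_map_singleton]
  ext i
  rw [Multiset.count_add, Multiset.count_add]
  simp only [Multiset.count_eq_of_nodup (Finset.nodup _), Finset.mem_val, Finset.mem_filter,
    Finset.mem_univ, true_and]
  rcases hx i with h | h | h <;> norm_num [h]

lemma isPartitionM_partOf_iff {x : Fin m → ℝ} (hx : IsCube x) :
    IsPartitionM (partOf x) ↔ plusM x ≠ 0 ∧ minusM x ≠ 0 := by
  rw [isPartitionM_iff, and_iff_left (partOf_sum hx)]
  simp only [partOf, Multiset.mem_cons, forall_eq_or_imp, Multiset.mem_map]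
  refine and_congr_right fun _ => and_iff_left ?_
  rintro B ⟨i, -, rfl⟩
  simp

lemma plusM_minusM_ne_zero {lam : Fin m → ℕ} (hpos : ∀ i, 0 < lam i) {x : Fin m → ℝ}
    (hx : x ∈ cutOf lam) (h0 : x ≠ 0) : plusM x ≠ 0 ∧ minusM x ≠ 0 := by
  have hw := weight_plusM_eq_weight_minusM hx
  have hiff : plusM x ≠ 0 ↔ minusM x ≠ 0 := by
    rw [← weight_ne_zero_iff hpos, ← weight_ne_zero_iff hpos, hw]
  obtain ⟨i, hi⟩ := Function.ne_iff.1 h0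
  have : plusM x ≠ 0 ∨ minusM x ≠ 0 := by
    rcases hx.1 i with h | h | h
    · right
      intro e
      have : i ∈ minusM x := by simp [minusM, h]
      simp [e] at this
    · exact absurd h hi
    · left
      intro e
      have : i ∈ plusM x := by simp [plusM, h]
      simp [e] at this
  tauto

lemma singletons_notMem_downClos {lam : Fin m → ℕ} (hpos : ∀ i, 0 < lam i)
    {A : Finset (Fin m)} (hA : 2 ≤ A.card) :
    (partOf (0 : Fin m → ℝ)).filter (fun B => B ≠ 0) ∉
      downClos (cutOf lam) (onlyBlock A) := by
  have hpart : (partOf (0 : Fin m → ℝ)).filter (fun B => B ≠ 0) =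
      (colourBlocks (id : Fin m → Fin m)).filter (fun B => B ≠ 0) := by
    have hs : colourBlock (id : Fin m → Fin m) = fun i => ({i} : Multiset (Fin m)) := by
      funext j
      simp [colourBlock, Finset.filter_eq']
    simp [partOf, plusM, minusM, colourBlocks, hs]
  rw [hpart, mem_downClos_iff hpos (Finset.card_pos.1 (by omega))]
  rintro ⟨f, ⟨j, hj⟩, hw⟩
  have hsurj : Function.Surjective f := by
    intro k
    have h := hw k
    simp only [id, Finset.filter_eq', Finset.mem_univ, if_true, Finset.sum_singleton] at h
    have hne : (Finset.univ.filter (fun i => f i = k)).Nonempty := by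
      rw [Finset.nonempty_iff_ne_empty]
      intro e
      have := hpos k
      rw [e, Finset.sum_empty] at h
      omega
    obtain ⟨i, hi⟩ := hne
    exact ⟨i, (Finset.mem_filter.1 hi).2⟩
  have hinj := Finite.injective_iff_surjective.2 hsurj
  obtain ⟨a, ha, b, hb, hab⟩ := Finset.one_lt_card.1 (by omega : 1 < A.card)
  exact hab (hinj ((hj a ha).trans (hj b hb).symm))

end Restriction

section Main

variable {n : ℕ} {lam : Fin (n + 1) → ℕ}

lemma lam_eq_lam_last_iff (hmono : Monotone lam) {μ : ℕ}
    (hμ : μ = (Finset.univ.filter (fun i => lam i = lam (Fin.last n))).card)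
    (i : Fin (n + 1)) : lam i = lam (Fin.last n) ↔ n + 1 - μ ≤ (i : ℕ) := by
  constructor
  · intro h
    have : (Finset.Ici i).card ≤ μ := by
      rw [hμ]
      refine Finset.card_le_card fun k hk => ?_
      simp only [Finset.mem_filter, Finset.mem_univ, true_and]
      exact le_antisymm (hmono (Fin.le_last k)) (h ▸ hmono (Finset.mem_Ici.1 hk))
    rw [Fin.card_Ici] at this
    omega
  · intro h
    by_contra hne
    have : μ ≤ (Finset.Ioi i).card := by
      rw [hμ]
      refine Finset.card_le_card fun k hk => ?_
      rw [Finset.mem_Ioi]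
      by_contra hle
      exact hne (le_antisymm (hmono (Fin.le_last i))
        ((Finset.mem_filter.1 hk).2 ▸ hmono (not_lt.1 hle)))
    rw [Fin.card_Ioi] at this
    omega

/-- Colourings of the same weights as `g` and constant on `I` exist if and only if they exist
after removing all parts equal to the largest one. -/
lemma exists_colouring_iff_restrict (hpos : ∀ i, 0 < lam i) (hmono : Monotone lam)
    (hseq : IsSequentialSeq lam) {l : ℕ} (hl : l ≤ n + 1)
    (htop : ∀ i, lam i = lam (Fin.last n) ↔ l ≤ (i : ℕ)) {I' : Finset (Fin l)}
    (hI : GoodSet lam (I'.map (Fin.castLEEmb hl))) {κ : Type*} [DecidableEq κ]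
    (g : Fin (n + 1) → κ) :
    (∃ f : Fin (n + 1) → κ, (∃ j, ∀ i ∈ I'.map (Fin.castLEEmb hl), f i = j) ∧
      SameWeights lam f g) ↔
    ∃ f : Fin l → κ, (∃ j, ∀ i ∈ I', f i = j) ∧
      SameWeights (fun i => lam (Fin.castLE hl i)) f (fun i => g (Fin.castLE hl i)) := by
  have key : ∀ f : Fin (n + 1) → κ, (∀ i : Fin (n + 1), l ≤ (i : ℕ) → f i = g i) →
      (SameWeights lam f g ↔ SameWeights (fun i => lam (Fin.castLE hl i))
        (fun i => f (Fin.castLE hl i)) (fun i => g (Fin.castLE hl i))) := by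
    intro f hf
    refine forall_congr' fun j => ?_
    simp only [Finset.sum_filter]
    rw [sum_eq_sum_castLE_add hl, sum_eq_sum_castLE_add hl (fun i => if g i = j then lam i else 0)]
    have : ∑ i ∈ Finset.univ.filter (fun i : Fin (n + 1) => l ≤ (i : ℕ)), (if f i = j then lam i else 0) =
        ∑ i ∈ Finset.univ.filter (fun i : Fin (n + 1) => l ≤ (i : ℕ)), (if g i = j then lam i else 0) :=
      Finset.sum_congr rfl fun i hi => by rw [hf i (Finset.mem_filter.1 hi).2]
    rw [this, add_left_inj]
  constructor
  · rintro ⟨f, hf, hfg⟩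
    obtain ⟨f', ⟨j, hj⟩, hw, hag⟩ := exists_agreeing_on_top hpos hmono hseq hI g _ f hf hfg le_rfl
    exact ⟨fun i => f' (Fin.castLE hl i),
      ⟨j, fun i hi => hj _ (Finset.mem_map_of_mem (Fin.castLEEmb hl) hi)⟩,
      (key f' fun i hi => hag i ((htop i).2 hi)).1 hw⟩
  · rintro ⟨f, ⟨j, hj⟩, hw⟩
    refine ⟨fun i => if h : (i : ℕ) < l then f ⟨i, h⟩ else g i, ⟨j, ?_⟩, ?_⟩
    · intro i hi
      obtain ⟨k, hk, rfl⟩ := Finset.mem_map.1 hi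
      simpa using hj k hk
    · refine (key _ fun i hi => dif_neg (not_lt.2 hi)).2 ?_
      simpa using hw

/-- If the parts equal to the largest one do not cancel in `x ∈ S_λ`, then the partition of `x`
lies below the partition with the only block `I(λ)`. -/
lemma partOf_mem_downClos (hpos : ∀ i, 0 < lam i) (hmono : Monotone lam)
    (hseq : IsSequentialSeq lam) {I : Finset (Fin (n + 1))} (hI : IsIlam lam I)
    {x : Fin (n + 1) → ℝ} (hx : x ∈ cutOf lam)
    (hsum : ∑ i with lam i = lam (Fin.last n), x i ≠ 0) :
    partOf x ∈ downClos (cutOf lam) (onlyBlock I) := by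
  have h0 : x ≠ 0 := by
    rintro rfl
    simp at hsum
  have hp : IsPartitionM (partOf x) :=
    (isPartitionM_partOf_iff hx.1).2 (plusM_minusM_ne_zero hpos hx h0)
  let P := Finset.univ.filter (fun i => x i = 1)
  let M := Finset.univ.filter (fun i => x i = -1)
  have hw : ∑ i ∈ P, lam i = ∑ i ∈ M, lam i := weight_plusM_eq_weight_minusM hx
  have hcard : ∑ i with lam i = lam (Fin.last n), x i =
      ((P.filter (fun i => lam i = lam (Fin.last n))).card : ℝ) -
        (M.filter (fun i => lam i = lam (Fin.last n))).card := by
    have hxi : ∀ i, x i = (if x i = 1 then (1 : ℝ) else 0) - (if x i = -1 then (1 : ℝ) else 0) := by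
      intro i
      rcases hx.1 i with h | h | h <;> rw [h] <;> norm_num
    rw [Finset.sum_congr rfl fun i _ => hxi i, Finset.sum_sub_distrib, Finset.sum_boole,
      Finset.sum_boole, Finset.filter_comm, Finset.filter_comm (fun i => lam i = lam (Fin.last n))]
  have hgood : ∃ B ∈ partOf x, ∃ J : Finset (Fin (n + 1)), GoodSet lam J ∧ ∀ i ∈ J, i ∈ B := by
    rw [hcard, sub_ne_zero, Ne, Nat.cast_inj] at hsum
    rcases lt_or_gt_of_ne hsum with h | h
    · obtain ⟨J, hJ, hJg⟩ := exists_good_subset hpos hmono hseq hw.symm h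
      exact ⟨plusM x, by simp [partOf], J, hJg, fun i hi => hJ hi⟩
    · obtain ⟨J, hJ, hJg⟩ := exists_good_subset hpos hmono hseq hw h
      exact ⟨minusM x, by simp [partOf], J, hJg, fun i hi => hJ hi⟩
  obtain ⟨k, g, hg⟩ := hp.exists_colouring
  obtain ⟨B, hB, J, hJ, hJB⟩ := hgood
  rw [← hp.filter_ne_zero, hg,
    mem_downClos_iff hpos (Finset.card_pos.1 (by have := hI.1.1; omega))]
  rw [hg] at hB
  obtain ⟨j, -, rfl⟩ := Multiset.mem_map.1 hB
  exact exists_recolouring_of_good hpos hseq hI _ g j J hJ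
    (fun i hi => by simpa [colourBlock] using hJB i hi) le_rfl

lemma mem_downClos_iff_restrictFirst (hpos : ∀ i, 0 < lam i) (hmono : Monotone lam)
    (hseq : IsSequentialSeq lam) {l : ℕ} (hl : l ≤ n + 1)
    (htop : ∀ i, lam i = lam (Fin.last n) ↔ l ≤ (i : ℕ)) {I' : Finset (Fin l)}
    (hI : GoodSet lam (I'.map (Fin.castLEEmb hl))) {ρ : Multiset (Multiset (Fin (n + 1)))}
    (hρ : IsPartitionM ρ) :
    ρ ∈ downClos (cutOf lam) (onlyBlock (I'.map (Fin.castLEEmb hl))) ↔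
      restrictFirst l ρ ∈
        downClos (cutOf fun i => lam (Fin.castLE hl i)) (onlyBlock I') := by
  obtain ⟨k, g, rfl⟩ := hρ.exists_colouring
  have hne : (I'.map (Fin.castLEEmb hl)).Nonempty :=
    Finset.card_pos.1 (by have := hI.1; omega)
  rw [restrictFirst_colourBlocks hl, mem_downClos_iff (fun i => hpos _) (Finset.map_nonempty.1 hne),
    ← exists_colouring_iff_restrict hpos hmono hseq hl htop hI, ← mem_downClos_iff hpos hne,
    hρ.filter_ne_zero]

lemma mem_cutMinus_iff_restrict (hpos : ∀ i, 0 < lam i) (hmono : Monotone lam)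
    (hseq : IsSequentialSeq lam) {l : ℕ} (hl : l ≤ n + 1)
    (htop : ∀ i, lam i = lam (Fin.last n) ↔ l ≤ (i : ℕ)) {I' : Finset (Fin l)}
    (hI : IsIlam lam (I'.map (Fin.castLEEmb hl))) (x : Fin (n + 1) → ℝ) :
    x ∈ cutMinus (cutOf lam)
        (downClos (cutOf lam) (onlyBlock (I'.map (Fin.castLEEmb hl)))) ↔
      IsCube x ∧ (fun i : Fin l => x (Fin.castLE hl i)) ∈
          cutMinus (cutOf fun i => lam (Fin.castLE hl i))
            (downClos (cutOf fun i => lam (Fin.castLE hl i)) (onlyBlock I')) ∧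
        (∑ i : Fin (n + 1), if l ≤ (i : ℕ) then x i else 0) = 0 := by
  have hposl : ∀ i, 0 < lam (Fin.castLE hl i) := fun i => hpos _
  rw [← Finset.sum_filter]
  have htopsum : ∑ i ∈ Finset.univ.filter (fun i : Fin (n + 1) => l ≤ (i : ℕ)), (lam i : ℝ) * x i =
      lam (Fin.last n) * ∑ i ∈ Finset.univ.filter (fun i : Fin (n + 1) => l ≤ (i : ℕ)), x i := by
    rw [Finset.mul_sum]
    exact Finset.sum_congr rfl fun i hi => by rw [(htop i).2 (Finset.mem_filter.1 hi).2]
  have hsplit := sum_eq_sum_castLE_add hl (fun i => (lam i : ℝ) * x i)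
  rw [htopsum] at hsplit
  constructor
  · rintro ⟨hxS, hxD⟩
    have htop0 : ∑ i ∈ Finset.univ.filter (fun i : Fin (n + 1) => l ≤ (i : ℕ)), x i = 0 := by
      by_contra hne
      refine hxD (partOf_mem_downClos hpos hmono hseq hI hxS ?_)
      simpa only [htop] using hne
    rw [htop0, mul_zero, add_zero, hxS.2] at hsplit
    refine ⟨hxS.1, ⟨⟨fun i => hxS.1 _, hsplit.symm⟩, fun hz => hxD ?_⟩, htop0⟩
    have hzne := (isPartitionM_partOf_iff (fun i => hxS.1 _)).1 hz.1
    have hx0 : x ≠ 0 := by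
      rintro rfl
      simp [plusM] at hzne
    rw [mem_downClos_iff_restrictFirst hpos hmono hseq hl htop hI.1
      ((isPartitionM_partOf_iff hxS.1).2 (plusM_minusM_ne_zero hpos hxS hx0)),
      restrictFirst_partOf hl, hz.1.filter_ne_zero]
    exact hz
  · rintro ⟨hxc, ⟨hzT, hzD⟩, htop0⟩
    rw [htop0, mul_zero, add_zero, hzT.2] at hsplit
    refine ⟨⟨hxc, hsplit⟩, fun hxD => ?_⟩
    have hres := (mem_downClos_iff_restrictFirst hpos hmono hseq hl htop hI.1 hxD.1).1 hxD
    rw [restrictFirst_partOf hl] at hres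
    by_cases hz0 : (fun i : Fin l => x (Fin.castLE hl i)) = 0
    · rw [hz0] at hres
      refine singletons_notMem_downClos hposl ?_ hres
      have := hI.1.1
      rwa [Finset.card_map] at this
    · rw [((isPartitionM_partOf_iff hzT.1).2
        (plusM_minusM_ne_zero hposl hzT hz0)).filter_ne_zero] at hres
      exact hzD hres

end Main

/-- for a sequential `λ` with `I(λ)` existing, the relative cut
`Q(S_λ, π↓S_λ)` is the product of `Q(T, ν↓T)` with the trivial resonance `(1^μ)`,
where `μ = mm(λ)` and `T` is the cut of `λ` restricted to the first `n−μ` parts. -/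
theorem relative_cut_sequential {n : ℕ} (lam : Fin (n + 1) → ℕ)
    (hpos : ∀ i, 0 < lam i) (hmono : Monotone lam) (hseq : IsSequentialSeq lam)
    (I : Finset (Fin (n + 1))) (hI : IsIlam lam I)
    (μ : ℕ) (hμ : μ = (Finset.univ.filter (fun i => lam i = lam (Fin.last n))).card)
    (hμn : μ ≤ n)
    (I' : Finset (Fin (n + 1 - μ)))
    (hI' : I = I'.map (Fin.castLEEmb (by omega))) :
    -- (i)
    downClos (cutOf lam) (onlyBlock I) =
      {ρ | IsPartitionM ρ ∧ restrictFirst (n + 1 - μ) ρ ∈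
        downClos (cutOf (fun i : Fin (n + 1 - μ) => lam (Fin.castLE (by omega) i)))
          (onlyBlock I')} ∧
    -- (ii)
    cutMinus (cutOf lam) (downClos (cutOf lam) (onlyBlock I)) =
      {x | IsCube x ∧
        (fun i : Fin (n + 1 - μ) => x (Fin.castLE (by omega) i)) ∈
          cutMinus (cutOf (fun i : Fin (n + 1 - μ) => lam (Fin.castLE (by omega) i)))
            (downClos (cutOf (fun i : Fin (n + 1 - μ) => lam (Fin.castLE (by omega) i)))
              (onlyBlock I')) ∧
        (∑ i : Fin (n + 1), if n + 1 - μ ≤ (i : ℕ) then x i else 0) = 0} := by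
  subst hI'
  have hl : n + 1 - μ ≤ n + 1 := Nat.sub_le _ _
  have htop := lam_eq_lam_last_iff hmono hμ
  refine ⟨?_, Set.ext fun x => mem_cutMinus_iff_restrict hpos hmono hseq hl htop hI x⟩
  ext ρ
  constructor
  · exact fun h => ⟨h.1,
      (mem_downClos_iff_restrictFirst hpos hmono hseq hl htop hI.1 h.1).1 h⟩
  · exact fun h => (mem_downClos_iff_restrictFirst hpos hmono hseq hl htop hI.1 h.1).2 h.2
end

section
/- Let t ≥ 1, let b_1, …, b_t be positive integers with b_i dividing b_{i+1} for every i = 1,…,t−1, and let m_1,…,m_t ≥ 1 be integers. Then the nondecreasing sequence λ consisting of m_i copies of b_i for each i = 1,…,t is strongly sequential. -/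
/-- If the values of `f` form a divisibility chain, all dividing `d`, and their sum over `S` is
at least `d`, then some subset of `S` has sum exactly `d`. -/
theorem exists_subset_sum_eq_of_dvd_chain {ι : Type*} [LinearOrder ι] {f : ι → ℕ}
    (hf : ∀ i j, i ≤ j → f i ∣ f j) {d : ℕ} (S : Finset ι) (hd : ∀ i ∈ S, f i ∣ d)
    (hS : d ≤ ∑ i ∈ S, f i) : ∃ J ⊆ S, d = ∑ j ∈ J, f j := by
  induction S using Finset.induction_on_min with
  | empty => exact ⟨∅, subset_rfl, by simpa using hS⟩
  | insert a s ha ih =>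
    by_cases hs : d ≤ ∑ i ∈ s, f i
    · obtain ⟨J, hJ, h⟩ := ih (fun i hi => hd i (Finset.mem_insert_of_mem hi)) hs
      exact ⟨J, hJ.trans (Finset.subset_insert a s), h⟩
    · refine ⟨insert a s, subset_rfl, le_antisymm hS ?_⟩
      have has : a ∉ s := fun h => lt_irrefl a (ha a h)
      have hdvd : f a ∣ ∑ i ∈ s, f i := Finset.dvd_sum fun i hi => hf a i (ha i hi).le
      have hle : f a ≤ d - ∑ i ∈ s, f i :=
        Nat.le_of_dvd (by omega) (Nat.dvd_sub (hd a (Finset.mem_insert_self a s)) hdvd)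
      rw [Finset.sum_insert has]
      omega

theorem Finset.sort_eq_sort_filter_le_append {α : Type*} [LinearOrder α] (A : Finset α) (w : α) :
    A.sort (· ≤ ·) =
      (A.filter (· ≤ w)).sort (· ≤ ·) ++ (A.filter (w < ·)).sort (· ≤ ·) := by
  refine List.Perm.eq_of_pairwise' (r := (· ≤ ·)) (A.pairwise_sort _) ?_ ?_
  · rw [List.pairwise_append]
    refine ⟨Finset.pairwise_sort _ _, Finset.pairwise_sort _ _, fun x hx y hy => ?_⟩
    simp only [Finset.mem_sort, Finset.mem_filter] at hx hy
    exact hx.2.trans hy.2.le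
  · rw [List.perm_ext_iff_of_nodup (A.sort_nodup _)]
    · intro x
      simp only [List.mem_append, Finset.mem_sort, Finset.mem_filter]
      have := le_or_gt x w
      tauto
    · refine List.Nodup.append (Finset.sort_nodup _ _) (Finset.sort_nodup _ _) fun x hx hy => ?_
      simp only [Finset.mem_sort, Finset.mem_filter] at hx hy
      exact absurd hx.2 (not_le.mpr hy.2)

theorem LexLarger.of_toColex_le {n : ℕ} {A B : Finset (Fin n)} (h : toColex B ≤ toColex A) :
    LexLarger A B := by
  by_cases hBA : B ⊆ A
  · exact Or.inl hBA
  right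
  have hlt := lt_of_le_of_ne h (fun e => hBA (toColex_inj.mp e).subset)
  obtain ⟨w, hwAB, hU⟩ := Finset.Colex.lt_iff_exists_filter_lt.mp hlt
  obtain ⟨hwA, hwB⟩ := Finset.mem_sdiff.mp hwAB
  obtain ⟨y, hyB, hyA⟩ := Finset.not_subset.mp hBA
  have hyw : y ≤ w := not_lt.mp fun hlt =>
    hyA (Finset.mem_filter.mp (hU ▸ Finset.mem_filter.mpr ⟨hyB, hlt⟩)).1
  have hA := A.sort_eq_sort_filter_le_append w
  have hB := B.sort_eq_sort_filter_le_append w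
  rw [hU] at hB
  have hwmem : w ∈ A.filter (· ≤ w) := by simp [hwA]
  have hymem : y ∈ B.filter (· ≤ w) := by simp [hyB, hyw]
  have hAlen : ((A.filter (· ≤ w)).sort (· ≤ ·)).length = (A.filter (· ≤ w)).card :=
    Finset.length_sort _
  have hBlen : ((B.filter (· ≤ w)).sort (· ≤ ·)).length = (B.filter (· ≤ w)).card :=
    Finset.length_sort _
  have hApos : 0 < (A.filter (· ≤ w)).card := Finset.card_pos.mpr ⟨w, hwmem⟩
  have hBpos : 0 < (B.filter (· ≤ w)).card := Finset.card_pos.mpr ⟨y, hymem⟩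
  have hAcard : A.card = (A.filter (· ≤ w)).card + (A.filter (w < ·)).card := by
    simpa using congrArg List.length hA
  have hBcard : B.card = (B.filter (· ≤ w)).card + (A.filter (w < ·)).card := by
    simpa using congrArg List.length hB
  refine ⟨(A.filter (w < ·)).card, by omega, fun i hi => ?_, w,
    ((B.filter (· ≤ w)).sort (· ≤ ·))[(B.filter (· ≤ w)).card - 1]'(by omega), ?_, ?_, ?_⟩
  · rw [hA, hB, List.getElem?_append_right (by omega), List.getElem?_append_right (by omega)]
    congr 1
    omega
  · rw [hA, List.getElem?_append_left (by omega), List.getElem?_eq_getElem (by omega)]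
    congr 1
    have hmax := Finset.sorted_last_eq_max' (s := A.filter (· ≤ w))
      (h := by omega)
    simp only [hAlen] at hmax
    have hi : A.card - 1 - (A.filter (w < ·)).card = (A.filter (· ≤ w)).card - 1 := by omega
    simp only [hi]
    rw [hmax]
    refine le_antisymm ?_ (Finset.le_max' _ _ hwmem)
    exact (Finset.mem_filter.mp (Finset.max'_mem _ ⟨w, hwmem⟩)).2
  · rw [hB, List.getElem?_append_left (by omega), List.getElem?_eq_getElem (by omega)]
    congr 2
    omega
  · have hmem := List.getElem_mem
      (show (B.filter (· ≤ w)).card - 1 < ((B.filter (· ≤ w)).sort (· ≤ ·)).length by omega)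
    rw [Finset.mem_sort, Finset.mem_filter] at hmem
    exact lt_of_le_of_ne hmem.2 fun e => hwB (e ▸ hmem.1)

theorem exists_isIlam {n : ℕ} {lam : Fin (n + 1) → ℕ} (h : ∃ I, GoodSet lam I) :
    ∃ I, IsIlam lam I := by
  classical
  obtain ⟨I, hI, hmax⟩ := Finset.exists_max_image
    (Finset.univ.filter fun I : Finset (Fin (n + 1)) => GoodSet lam I) toColex
    (by simpa [Finset.Nonempty] using h)
  simp only [Finset.mem_filter, Finset.mem_univ, true_and] at hI hmax
  exact ⟨I, hI, fun J hJ => .of_toColex_le (hmax J hJ)⟩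

theorem stronglySequential_of_dvd_chain {n : ℕ} {lam : Fin (n + 1) → ℕ} (hpos : ∀ i, 0 < lam i)
    (hdvd : ∀ i j, i ≤ j → lam i ∣ lam j) : StronglySequential lam := by
  refine ⟨fun I J hIJ q hq hmax => ?_, ?_⟩
  · refine exists_subset_sum_eq_of_dvd_chain hdvd J
      (fun j hj => hdvd j q (hmax j (Finset.mem_union_right I hj))) ?_
    rw [← hIJ]
    exact Finset.single_le_sum (f := lam) (fun i _ => Nat.zero_le _) hq
  · rw [or_iff_not_imp_left]
    intro h
    push Not at h
    obtain ⟨I, hI⟩ := exists_isIlam h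
    obtain ⟨hcard, hsum⟩ := hI.1
    have hne : I.Nonempty := Finset.card_pos.mp (by omega)
    have hq := I.max'_mem hne
    set q := I.max' hne
    have hle : ∀ p ∈ I, p ≤ q := fun p hp => I.le_max' p hp
    refine ⟨I, hI, q, hq, hle, exists_subset_sum_eq_of_dvd_chain hdvd _
      (fun j hj => hdvd j q (hle j (Finset.mem_of_mem_erase hj))) ?_⟩
    have hadd := Finset.add_sum_erase I lam hq
    refine Nat.le_of_dvd (Finset.sum_pos (fun i _ => hpos i) ?_) ?_
    · rw [← Finset.card_pos, Finset.card_erase_of_mem hq]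
      omega
    · rw [← Nat.dvd_add_right (dvd_refl (lam q)), hadd, hsum]
      exact hdvd q _ (Fin.le_last q)

/-- a nondecreasing sequence consisting of `m_i` copies of `b_i`
(`i = 1,…,t`), where each `b_i` divides `b_{i+1}`, is strongly sequential. -/
theorem division_chain_strongly_sequential (t : ℕ) (ht : 1 ≤ t) (b m : Fin t → ℕ)
    (hb : ∀ i, 0 < b i) (hm : ∀ i, 1 ≤ m i)
    (hdvd : ∀ i : Fin t, ∀ h : (i : ℕ) + 1 < t, b i ∣ b ⟨(i : ℕ) + 1, h⟩)
    (N : ℕ) (lam : Fin (N + 1) → ℕ) (hmono : Monotone lam)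
    (hms : Multiset.map lam Finset.univ.val =
      (Finset.univ.val : Multiset (Fin t)).bind
        (fun i => Multiset.replicate (m i) (b i))) :
    StronglySequential lam := by
  have hchain : ∀ i j : Fin t, i ≤ j → b i ∣ b j := by
    rintro i ⟨j, hj⟩ hij
    induction j with
    | zero => rw [show i = ⟨0, hj⟩ from le_antisymm hij (Nat.zero_le _)]
    | succ k ih =>
      rcases hij.eq_or_lt with rfl | hlt
      · exact dvd_rfl
      · exact (ih (by omega) (Nat.lt_succ_iff.mp hlt)).trans (hdvd ⟨k, by omega⟩ hj)
  have hval : ∀ i, ∃ k, lam i = b k := by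
    intro i
    have hmem : lam i ∈ Multiset.map lam Finset.univ.val :=
      Multiset.mem_map_of_mem lam (Finset.mem_univ i)
    rw [hms, Multiset.mem_bind] at hmem
    obtain ⟨k, -, hk⟩ := hmem
    exact ⟨k, Multiset.eq_of_mem_replicate hk⟩
  have hpos : ∀ i, 0 < lam i := fun i => by
    obtain ⟨k, hk⟩ := hval i
    exact hk ▸ hb k
  refine stronglySequential_of_dvd_chain hpos fun i j hij => ?_
  obtain ⟨k, hk⟩ := hval i
  obtain ⟨l, hl⟩ := hval j
  rcases le_total k l with hkl | hlk
  · exact hk ▸ hl ▸ hchain k l hkl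
  · have hji : lam j ∣ lam i := hk ▸ hl ▸ hchain l k hlk
    exact (le_antisymm (hmono hij) (Nat.le_of_dvd (hpos i) hji)).dvd
end
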